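/- Let f be a meromorphic solution on a punctured disc around a of a second-order ODE f'' = (q(x) − E) f, where q is meromorphic at a, even in (x−a), with a double pole at a whose leading coefficient is l(l+1) for a nonnegative integer l. Then the local monodromy of the solution space of this equation around a is trivial (the monodromy matrix is the identity). -/

import Mathlib

open Metric

/-!
Write the equation as `(x - a)² f'' = P f` with `P = Q - E (x - a)²`, which is holomorphic and even
about `a`, with `P(a) = l (l + 1)`. Its exponents `ρ` are `-l` and `l + 1`, and
`f = (x - a) ^ ρ * ∑ c n (x - a) ^ n` is a solution exactly when
`n (n + 2ρ - 1) c n = ∑_{m < n} c m p (n - m)`, where `P = ∑ p n (x - a) ^ n`. The left-hand factor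
can vanish only at an odd `n > 0`, because the exponents differ by the odd integer `2l + 1`; by
parity all odd `p n` and `c n` are zero, so the right-hand side then vanishes too and no logarithm
is needed. Since `1 / (n (n + 2ρ - 1))` is summable, a discrete Grönwall estimate shows that the
series converges wherever that of `P` does. The two solutions have distinct orders at `a`, so they
are linearly independent.
-/

open Filter Topology Finset

section FrobeniusCoefficients

variable {K : Type*} [Field K]

/-- The increment `I(ρ + n) - I(ρ)` of `I(s) = s (s - 1)`. When `ρ` is an exponent of
`x² f'' = P f`, i.e. `I(ρ) = P(0)`, this is the value at `ρ + n` of the indicial polynomial. -/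
def indicialIncrement (ρ : K) (n : ℕ) : K :=
  (n + (ρ - 1)) * (n + ρ) - ρ * (ρ - 1)

lemma indicialIncrement_eq_mul (ρ : K) (n : ℕ) :
    indicialIncrement ρ n = n * (n + (2 * ρ - 1)) := by
  unfold indicialIncrement
  ring

lemma odd_of_indicialIncrement_eq_zero [CharZero K] {ρ : ℤ} {n : ℕ} (hn : n ≠ 0)
    (h : indicialIncrement (ρ : K) n = 0) : Odd n := by
  rw [indicialIncrement_eq_mul] at h
  have hroot : (n : ℤ) + (2 * ρ - 1) = 0 :=
    mod_cast (mul_eq_zero.1 h).resolve_left (Nat.cast_ne_zero.2 hn)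
  exact (Int.odd_coe_nat n).1 ⟨-ρ, by lia⟩

/-- The normalized coefficients `c n` of the formal Frobenius solution
`x ^ ρ * ∑ n, c n * x ^ n` of `x² f'' = P f`, where `P = ∑ n, p n * x ^ n`. At a resonance, where
the indicial increment vanishes, division by zero selects `c n = 0`. -/
def frobeniusCoeff (p : ℕ → K) (ρ : K) : ℕ → K
  | 0 => 1
  | n + 1 => (indicialIncrement ρ (n + 1))⁻¹ *
      ∑ m : Fin (n + 1), frobeniusCoeff p ρ m * p (n + 1 - m)
decreasing_by exact m.2

lemma frobeniusCoeff_zero (p : ℕ → K) (ρ : K) : frobeniusCoeff p ρ 0 = 1 := by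
  rw [frobeniusCoeff]

lemma frobeniusCoeff_of_ne_zero (p : ℕ → K) (ρ : K) {n : ℕ} (hn : n ≠ 0) :
    frobeniusCoeff p ρ n =
      (indicialIncrement ρ n)⁻¹ * ∑ m ∈ range n, frobeniusCoeff p ρ m * p (n - m) := by
  obtain ⟨k, rfl⟩ := Nat.exists_eq_succ_of_ne_zero hn
  rw [frobeniusCoeff, sum_range]

lemma sum_mul_sub_eq_zero_of_odd {R : Type*} [Semiring R] {c p : ℕ → R} {n : ℕ} (hn : Odd n)
    (hp : ∀ m, Odd m → p m = 0) (hc : ∀ m < n, Odd m → c m = 0) :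
    ∑ m ∈ range n, c m * p (n - m) = 0 := by
  refine sum_eq_zero fun m hm ↦ ?_
  have hmn : m < n := mem_range.1 hm
  rcases m.even_or_odd with hm_even | hm_odd
  · rw [hp _ (Nat.Odd.sub_even hmn.le hn hm_even), mul_zero]
  · rw [hc m hmn hm_odd, zero_mul]

lemma frobeniusCoeff_eq_zero_of_odd {p : ℕ → K} (hp : ∀ m, Odd m → p m = 0) (ρ : K) {n : ℕ}
    (hn : Odd n) : frobeniusCoeff p ρ n = 0 := by
  induction n using Nat.strong_induction_on with
  | _ n ih =>
    rw [frobeniusCoeff_of_ne_zero p ρ hn.pos.ne',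
      sum_mul_sub_eq_zero_of_odd hn hp fun m hm ↦ ih m hm, mul_zero]

lemma indicialIncrement_mul_frobeniusCoeff [CharZero K] {p : ℕ → K}
    (hp : ∀ m, Odd m → p m = 0) (ρ : ℤ) (n : ℕ) :
    indicialIncrement (ρ : K) n * frobeniusCoeff p ρ n =
      ∑ m ∈ range n, frobeniusCoeff p ρ m * p (n - m) := by
  rcases eq_or_ne n 0 with rfl | hn
  · simp [indicialIncrement_eq_mul]
  by_cases hres : indicialIncrement (ρ : K) n = 0
  · have hn_odd : Odd n := odd_of_indicialIncrement_eq_zero hn hres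
    rw [hres, zero_mul, sum_mul_sub_eq_zero_of_odd hn_odd hp
      fun m _ hm ↦ frobeniusCoeff_eq_zero_of_odd hp _ hm]
  · rw [frobeniusCoeff_of_ne_zero p _ hn, mul_inv_cancel_left₀ hres]

lemma add_mul_add_mul_frobeniusCoeff [CharZero K] {p : ℕ → K} (hp : ∀ m, Odd m → p m = 0)
    {ρ : ℤ} (hρ : p 0 = ρ * (ρ - 1)) (n : ℕ) :
    (n + ((ρ : K) - 1)) * ((n + ρ) * frobeniusCoeff p ρ n) =
      ∑ m ∈ range (n + 1), frobeniusCoeff p ρ m * p (n - m) := by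
  rw [sum_range_succ, Nat.sub_self, hρ, ← indicialIncrement_mul_frobeniusCoeff hp,
    indicialIncrement]
  ring

end FrobeniusCoefficients

section Convergence

-- The partial sums `S n` of `‖c n‖` satisfy `S (n + 1) ≤ (1 + M * ‖k n‖) * S n`.
lemma summable_norm_of_eq_mul_sum {A : Type*} [SeminormedRing A] {c k p : ℕ → A} {M : ℝ}
    (hp : ∀ n, ‖p n‖ ≤ M) (hk : Summable fun n ↦ ‖k n‖)
    (hc : ∀ n ≠ 0, c n = k n * ∑ m ∈ range n, c m * p (n - m)) :
    Summable fun n ↦ ‖c n‖ := by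
  set S : ℕ → ℝ := fun n ↦ ∑ m ∈ range n, ‖c m‖ with hS
  have hM : 0 ≤ M := (norm_nonneg _).trans (hp 0)
  have hSnonneg (n : ℕ) : 0 ≤ S n := sum_nonneg fun m _ ↦ norm_nonneg _
  have hstep (n : ℕ) (hn : 1 ≤ n) : S (n + 1) ≤ (1 + M * ‖k n‖) * S n + 0 := by
    have hconv : ‖∑ m ∈ range n, c m * p (n - m)‖ ≤ M * S n := by
      rw [mul_comm, hS, sum_mul]
      exact norm_sum_le_of_le _ fun m _ ↦ norm_mul_le_of_le le_rfl (hp _)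
    have hcn : ‖c n‖ ≤ ‖k n‖ * (M * S n) := by
      rw [hc n (by lia)]
      exact norm_mul_le_of_le le_rfl hconv
    have hsucc : S (n + 1) = S n + ‖c n‖ := sum_range_succ _ _
    linarith
  have hbound (n : ℕ) (hn : 1 ≤ n) : S n ≤ S 1 * Real.exp (∑' m, M * ‖k m‖) := by
    have hgronwall := discrete_gronwall (hSnonneg 1) hstep (fun _ _ ↦ by positivity)
      (fun _ _ ↦ le_rfl) hn
    rw [sum_const_zero, add_zero] at hgronwall
    refine hgronwall.trans ?_
    gcongr
    exact (hk.mul_left M).sum_le_tsum _ fun _ _ ↦ by positivity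
  have hmono (n : ℕ) : S n ≤ S (n + 1) :=
    sum_le_sum_of_subset_of_nonneg (range_subset_range.2 n.le_succ) fun _ _ _ ↦ norm_nonneg _
  exact summable_of_sum_range_le (fun _ ↦ norm_nonneg _)
    fun n ↦ (hmono n).trans (hbound (n + 1) n.succ_pos)

lemma summable_norm_inv_indicialIncrement (ρ : ℂ) :
    Summable fun n ↦ ‖(indicialIncrement ρ n)⁻¹‖ := by
  have hsq : Summable fun n : ℕ ↦ 2 * (1 / (n : ℝ) ^ 2) :=
    (Real.summable_one_div_nat_pow.2 one_lt_two).mul_left 2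
  refine hsq.of_norm_bounded_eventually_nat ?_
  filter_upwards [tendsto_natCast_atTop_atTop.eventually_ge_atTop (2 * ‖2 * ρ - 1‖),
    eventually_gt_atTop 0] with n hlarge hpos
  have : (0 : ℝ) < n := Nat.cast_pos.2 hpos
  have hfactor : (n : ℝ) / 2 ≤ ‖(n : ℂ) + (2 * ρ - 1)‖ := by
    have := norm_sub_le_norm_add (n : ℂ) (2 * ρ - 1)
    rw [Complex.norm_natCast] at this
    linarith
  rw [norm_norm, indicialIncrement_eq_mul, norm_inv, norm_mul, Complex.norm_natCast]
  calc (n * ‖(n : ℂ) + (2 * ρ - 1)‖)⁻¹ ≤ (n * ((n : ℝ) / 2))⁻¹ := by gcongr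
    _ = 2 * (1 / (n : ℝ) ^ 2) := by field_simp

lemma summable_frobeniusCoeff_mul_pow {p : ℕ → ℂ} {z : ℂ} (hp : Summable fun n ↦ p n * z ^ n)
    (ρ : ℂ) : Summable fun n ↦ frobeniusCoeff p ρ n * z ^ n := by
  obtain ⟨M, hM⟩ := hp.norm.tendsto_atTop_zero.bddAbove_range
  refine (summable_norm_of_eq_mul_sum (fun n ↦ hM ⟨n, rfl⟩)
    (summable_norm_inv_indicialIncrement ρ) fun n hn ↦ ?_).of_norm
  rw [frobeniusCoeff_of_ne_zero p ρ hn, mul_assoc, sum_mul]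
  congr 1
  refine sum_congr rfl fun m hm ↦ ?_
  rw [← pow_mul_pow_sub z (mem_range.1 hm).le]
  ring

end Convergence

/-- The scalar power series `∑ n, c n * (x - a) ^ n` converges to `g x` on the disc of radius `R`
around `a`. In contrast to Mathlib's `HasFPowerSeriesOnBall`, the coefficients are numbers, as
needed to compare them with a recursion, and the radius is an arbitrary real. -/
def HasScalarPowerSeriesOnBall (g : ℂ → ℂ) (c : ℕ → ℂ) (a : ℂ) (R : ℝ) : Prop :=
  ∀ x ∈ ball a R, HasSum (fun n ↦ c n * (x - a) ^ n) (g x)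

/-- The operator `(x - a) d/dx + ρ`, which is what `(x - a) d/dx` becomes after conjugation by
`(x - a) ^ ρ`. -/
noncomputable def shiftedEuler {𝕜 : Type*} [NontriviallyNormedField 𝕜] (a ρ : 𝕜) (g : 𝕜 → 𝕜) :
    𝕜 → 𝕜 :=
  fun x ↦ (x - a) * deriv g x + ρ * g x

namespace HasScalarPowerSeriesOnBall

variable {g h : ℂ → ℂ} {c d : ℕ → ℂ} {a x : ℂ} {R : ℝ}

lemma unique (hg : HasScalarPowerSeriesOnBall g c a R) (hh : HasScalarPowerSeriesOnBall h c a R)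
    (hx : x ∈ ball a R) : g x = h x :=
  (hg x hx).unique (hh x hx)

lemma apply_center (hg : HasScalarPowerSeriesOnBall g c a R) (hR : 0 < R) : g a = c 0 := by
  refine (hg a (mem_ball_self hR)).unique ?_
  simpa using hasSum_single (f := fun n ↦ c n * (a - a) ^ n) 0 fun n hn ↦ by simp [hn]

lemma exists_summable_norm_le (hg : HasScalarPowerSeriesOnBall g c a R) (hx : x ∈ ball a R) :
    ∃ r ≤ R, x ∈ ball a r ∧ ∃ u : ℕ → ℝ, Summable u ∧
      ∀ n, ∀ w ∈ ball a r, ‖c n * (w - a) ^ n‖ ≤ u n := by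
  obtain ⟨r, hxr, hrR⟩ := exists_between (mem_ball.1 hx)
  have hr : 0 < r := dist_nonneg.trans_lt hxr
  have hmem : a + r ∈ ball a R := by simpa [abs_of_pos hr] using hrR
  refine ⟨r, hrR.le, hxr, _, (hg _ hmem).summable.norm, fun n w hw ↦ ?_⟩
  have hw : ‖w - a‖ ≤ ‖a + r - a‖ := by
    simpa [abs_of_pos hr] using (mem_ball_iff_norm.1 hw).le
  rw [norm_mul, norm_mul, norm_pow, norm_pow]
  gcongr

lemma eqOn_tsum (hg : HasScalarPowerSeriesOnBall g c a R) :
    Set.EqOn g (fun x ↦ ∑' n, c n * (x - a) ^ n) (ball a R) :=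
  fun x hx ↦ (hg x hx).tsum_eq.symm

lemma differentiableOn (hg : HasScalarPowerSeriesOnBall g c a R) :
    DifferentiableOn ℂ g (ball a R) := by
  intro x hx
  obtain ⟨r, hrR, hxr, u, hu, hle⟩ := hg.exists_summable_norm_le hx
  have hdiff : DifferentiableOn ℂ g (ball a r) :=
    (Complex.differentiableOn_tsum_of_summable_norm hu (fun n ↦ by fun_prop) isOpen_ball hle).congr
      (hg.eqOn_tsum.mono (ball_subset_ball hrR))
  exact (hdiff.differentiableAt (isOpen_ball.mem_nhds hxr)).differentiableWithinAt

lemma hasSum_deriv (hg : HasScalarPowerSeriesOnBall g c a R) (hx : x ∈ ball a R) :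
    HasSum (fun n : ℕ ↦ c n * (n * (x - a) ^ (n - 1))) (deriv g x) := by
  obtain ⟨r, _, hxr, u, hu, hle⟩ := hg.exists_summable_norm_le hx
  rw [(hg.eqOn_tsum.eventuallyEq_of_mem (isOpen_ball.mem_nhds hx)).deriv_eq]
  refine (Complex.hasSum_deriv_of_summable_norm hu (fun n ↦ by fun_prop) isOpen_ball hle
    hxr).congr_fun fun n ↦ ?_
  simp

lemma shiftedEuler (hg : HasScalarPowerSeriesOnBall g c a R) (ρ : ℂ) :
    HasScalarPowerSeriesOnBall (shiftedEuler a ρ g) (fun n ↦ (n + ρ) * c n) a R := by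
  intro x hx
  refine (((hg.hasSum_deriv hx).mul_left (x - a)).add ((hg x hx).mul_left ρ)).congr_fun fun n ↦ ?_
  cases n with
  | zero => simp
  | succ n => simp only [Nat.add_sub_cancel]; ring

lemma mul (hg : HasScalarPowerSeriesOnBall g c a R) (hh : HasScalarPowerSeriesOnBall h d a R) :
    HasScalarPowerSeriesOnBall (g * h) (fun n ↦ ∑ m ∈ range (n + 1), c m * d (n - m)) a R := by
  intro x hx
  have hprod := hasSum_sum_range_mul_of_summable_norm (hg x hx).summable.norm
    (hh x hx).summable.norm
  rw [(hg x hx).tsum_eq, (hh x hx).tsum_eq] at hprod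
  refine hprod.congr_fun fun n ↦ ?_
  rw [sum_mul]
  refine sum_congr rfl fun m hm ↦ ?_
  rw [← pow_mul_pow_sub (x - a) (mem_range_succ_iff.1 hm)]
  ring

end HasScalarPowerSeriesOnBall

lemma iteratedDeriv_eq_zero_of_even_about {𝕜 F : Type*} [NontriviallyNormedField 𝕜]
    [NormedAddCommGroup F] [NormedSpace 𝕜 F] [IsAddTorsionFree F] {f : 𝕜 → F} {a : 𝕜}
    (hf : ∀ᶠ x in 𝓝 a, f (2 * a - x) = f x) {n : ℕ} (hn : Odd n) : iteratedDeriv n f a = 0 := by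
  have hreflect : iteratedDeriv n f a = -iteratedDeriv n f a := by
    calc iteratedDeriv n f a = iteratedDeriv n (fun x ↦ f (2 * a - x)) a :=
          (EventuallyEq.iteratedDeriv_eq n hf).symm
      _ = -iteratedDeriv n f a := by
        rw [iteratedDeriv_comp_const_sub]
        simp [hn.neg_one_pow, two_mul]
  exact self_eq_neg.1 hreflect

lemma hasScalarPowerSeriesOnBall_taylor {P : ℂ → ℂ} {a : ℂ} {R : ℝ}
    (hP : DifferentiableOn ℂ P (ball a R)) :
    HasScalarPowerSeriesOnBall P (fun n ↦ (n.factorial : ℂ)⁻¹ * iteratedDeriv n P a) a R := by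
  intro x hx
  refine (Complex.hasSum_taylorSeries_on_ball hP hx).congr_fun fun n ↦ ?_
  simp only [smul_eq_mul]
  ring

section ZpowMul

variable {𝕜 : Type*} [NontriviallyNormedField 𝕜] {g : 𝕜 → 𝕜} {a x : 𝕜}

lemma deriv_zpow_mul (ρ : ℤ) (hg : DifferentiableAt 𝕜 g x) (hx : x ≠ a) :
    deriv (fun y ↦ (y - a) ^ ρ * g y) x = (x - a) ^ (ρ - 1) * shiftedEuler a ρ g x := by
  have hxa : x - a ≠ 0 := sub_ne_zero.2 hx
  have hzpow : HasDerivAt (fun y ↦ (y - a) ^ ρ) (ρ * (x - a) ^ (ρ - 1)) x :=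
    (hasDerivAt_zpow ρ (x - a) (Or.inl hxa)).comp_sub_const x a
  rw [(hzpow.fun_mul hg.hasDerivAt).deriv, shiftedEuler, zpow_sub_one₀ hxa]
  field_simp
  ring

lemma deriv_deriv_zpow_mul [CompleteSpace 𝕜] (ρ : ℤ) (hg : AnalyticAt 𝕜 g x) (hx : x ≠ a) :
    deriv (deriv fun y ↦ (y - a) ^ ρ * g y) x =
      (x - a) ^ (ρ - 2) * shiftedEuler a (ρ - 1) (shiftedEuler a ρ g) x := by
  have hfirst : deriv (fun y ↦ (y - a) ^ ρ * g y) =ᶠ[𝓝 x]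
      fun y ↦ (y - a) ^ (ρ - 1) * shiftedEuler a ρ g y := by
    filter_upwards [hg.eventually_analyticAt, eventually_ne_nhds hx] with y hgy hya
    exact deriv_zpow_mul ρ hgy.differentiableAt hya
  have hEuler : AnalyticAt 𝕜 (shiftedEuler a (ρ : 𝕜) g) x := by
    have := hg.deriv
    unfold shiftedEuler
    fun_prop
  rw [hfirst.deriv_eq, deriv_zpow_mul (ρ - 1) hEuler.differentiableAt hx, sub_sub, Int.cast_sub,
    Int.cast_one, one_add_one_eq_two]

end ZpowMul

lemma eq_zero_of_meromorphicOrderAt_ne {𝕜 : Type*} [NontriviallyNormedField 𝕜] {f₁ f₂ : 𝕜 → 𝕜}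
    {a : 𝕜} (hf₁ : MeromorphicAt f₁ a) (hf₂ : MeromorphicAt f₂ a)
    (htop₁ : meromorphicOrderAt f₁ a ≠ ⊤) (htop₂ : meromorphicOrderAt f₂ a ≠ ⊤)
    (hne : meromorphicOrderAt f₁ a ≠ meromorphicOrderAt f₂ a) {c₁ c₂ : 𝕜}
    (h : ∀ᶠ x in 𝓝[≠] a, c₁ * f₁ x + c₂ * f₂ x = 0) : c₁ = 0 ∧ c₂ = 0 := by
  classical
  have horder (c : 𝕜) {f : 𝕜 → 𝕜} (hf : MeromorphicAt f a) :
      meromorphicOrderAt (fun x ↦ c * f x) a =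
        (if c = 0 then ⊤ else 0) + meromorphicOrderAt f a := by
    rw [← meromorphicOrderAt_const a c]
    exact meromorphicOrderAt_mul (MeromorphicAt.const c a) hf
  have heq : meromorphicOrderAt (fun x ↦ c₁ * f₁ x) a =
      meromorphicOrderAt (fun x ↦ -c₂ * f₂ x) a := by
    refine meromorphicOrderAt_congr (h.mono fun x hx ↦ ?_)
    linear_combination hx
  rw [horder c₁ hf₁, horder (-c₂) hf₂] at heq
  by_cases h₁ : c₁ = 0 <;> by_cases h₂ : c₂ = 0 <;> simp_all

section FrobeniusSolution

variable {P : ℂ → ℂ} {a : ℂ} {R : ℝ} {ρ : ℤ}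

lemma exists_shiftedEuler_shiftedEuler_eq (hR : 0 < R) (hP : DifferentiableOn ℂ P (ball a R))
    (heven : ∀ x ∈ ball a R, P (2 * a - x) = P x) (hρ : P a = ρ * (ρ - 1)) :
    ∃ g : ℂ → ℂ, DifferentiableOn ℂ g (ball a R) ∧ g a ≠ 0 ∧
      ∀ x ∈ ball a R, shiftedEuler a (ρ - 1) (shiftedEuler a ρ g) x = g x * P x := by
  set p : ℕ → ℂ := fun n ↦ (n.factorial : ℂ)⁻¹ * iteratedDeriv n P a
  have hPseries : HasScalarPowerSeriesOnBall P p a R := hasScalarPowerSeriesOnBall_taylor hP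
  have hpodd (n : ℕ) (hn : Odd n) : p n = 0 := by
    have hderiv : iteratedDeriv n P a = 0 :=
      iteratedDeriv_eq_zero_of_even_about (eventually_of_mem (ball_mem_nhds a hR) heven) hn
    simp only [p, hderiv, mul_zero]
  have hp0 : p 0 = ρ * (ρ - 1) := by rw [← hPseries.apply_center hR, hρ]
  set g : ℂ → ℂ := fun x ↦ ∑' n, frobeniusCoeff p ρ n * (x - a) ^ n
  have hg : HasScalarPowerSeriesOnBall g (frobeniusCoeff p ρ) a R := fun x hx ↦
    (summable_frobeniusCoeff_mul_pow (hPseries x hx).summable ρ).hasSum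
  refine ⟨g, hg.differentiableOn, ?_, fun x hx ↦ ?_⟩
  · rw [hg.apply_center hR, frobeniusCoeff_zero]
    exact one_ne_zero
  · have hEuler := (hg.shiftedEuler ρ).shiftedEuler (ρ - 1)
    simp only [add_mul_add_mul_frobeniusCoeff hpodd hp0] at hEuler
    exact hEuler.unique (hg.mul hPseries) hx

theorem exists_frobenius_solution (hR : 0 < R) (hP : DifferentiableOn ℂ P (ball a R))
    (heven : ∀ x ∈ ball a R, P (2 * a - x) = P x) (hρ : P a = ρ * (ρ - 1)) :
    ∃ f : ℂ → ℂ, AnalyticOn ℂ f (ball a R \ {a}) ∧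
      (∀ x ∈ ball a R \ {a}, deriv (deriv f) x = P x / (x - a) ^ 2 * f x) ∧
      MeromorphicAt f a ∧ meromorphicOrderAt f a = ρ := by
  obtain ⟨g, hg, hga_ne, hode⟩ := exists_shiftedEuler_shiftedEuler_eq hR hP heven hρ
  have hg_an : AnalyticOnNhd ℂ g (ball a R) := hg.analyticOnNhd isOpen_ball
  have hg_an_a : AnalyticAt ℂ g a := hg_an a (mem_ball_self hR)
  have hmero : MeromorphicAt (fun x ↦ (x - a) ^ ρ * g x) a := by fun_prop
  refine ⟨fun x ↦ (x - a) ^ ρ * g x, fun x hx ↦ ?_, fun x hx ↦ ?_, hmero, ?_⟩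
  · have hxa : x - a ≠ 0 := sub_ne_zero.2 hx.2
    have hpow : AnalyticAt ℂ (fun y ↦ (y - a) ^ ρ) x :=
      AnalyticAt.fun_zpow (by fun_prop) hxa
    exact (hpow.mul (hg_an x hx.1)).analyticWithinAt
  · have hxa : x - a ≠ 0 := sub_ne_zero.2 hx.2
    rw [deriv_deriv_zpow_mul ρ (hg_an x hx.1) hx.2, hode x hx.1, zpow_sub₀ hxa, zpow_ofNat]
    ring
  · exact (meromorphicOrderAt_eq_int_iff hmero).2 ⟨g, hg_an_a, hga_ne, .of_forall fun _ ↦ rfl⟩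

end FrobeniusSolution

lemma even_about_of_even_about_div_sq {K : Type*} [NormedField K] {q Q : K → K} {a : K} {R : ℝ}
    (hq : ∀ x ∈ ball a R, x ≠ a → q x = Q x / (x - a) ^ 2)
    (heven : ∀ z, a + z ∈ ball a R → z ≠ 0 → q (a + z) = q (a - z)) {x : K}
    (hx : x ∈ ball a R) : Q (2 * a - x) = Q x := by
  rcases eq_or_ne x a with rfl | hxa
  · rw [two_mul, add_sub_cancel_right]
  have hadd : a + (x - a) = x := add_sub_cancel a x
  have hsub : a - (x - a) = 2 * a - x := by ring
  have hrefl : 2 * a - x - a = -(x - a) := by ring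
  have hxa' : x - a ≠ 0 := sub_ne_zero.2 hxa
  have hne : 2 * a - x ≠ a := by rwa [← sub_ne_zero, hrefl, neg_ne_zero]
  have hmem : 2 * a - x ∈ ball a R := by
    rwa [mem_ball_iff_norm, hrefl, norm_neg, ← mem_ball_iff_norm]
  have hqx : q x = q (2 * a - x) := by
    simpa only [hadd, hsub] using heven (x - a) (by rwa [hadd]) hxa'
  rw [hq x hx hxa, hq _ hmem hne, hrefl, neg_sq] at hqx
  exact ((div_left_inj' (pow_ne_zero 2 hxa')).1 hqx).symm

/-- Triviality of the local monodromy around `a` for `f'' = (q - E) f`, where `q`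
is meromorphic at `a`, even about `a`, with a double pole of leading coefficient
`l(l+1)`, `l ∈ ℤ_{≥0}`: there exist two linearly independent single-valued
(analytic) solutions on the punctured disc. -/
theorem stmt4 (a : ℂ) (R : ℝ) (hR : 0 < R) (l : ℕ) (E : ℂ) (q Q : ℂ → ℂ)
    (hQ : AnalyticOn ℂ Q (ball a R))
    (hQa : Q a = (l : ℂ) * ((l : ℂ) + 1))
    (hq : ∀ x ∈ ball a R, x ≠ a → q x = Q x / (x - a) ^ 2)
    (heven : ∀ z : ℂ, a + z ∈ ball a R → z ≠ 0 → q (a + z) = q (a - z)) :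
    ∃ f₁ f₂ : ℂ → ℂ,
      AnalyticOn ℂ f₁ (ball a R \ {a}) ∧
      AnalyticOn ℂ f₂ (ball a R \ {a}) ∧
      (∀ x ∈ ball a R \ {a}, deriv (deriv f₁) x = (q x - E) * f₁ x) ∧
      (∀ x ∈ ball a R \ {a}, deriv (deriv f₂) x = (q x - E) * f₂ x) ∧
      (∀ c₁ c₂ : ℂ, (∀ x ∈ ball a R \ {a}, c₁ * f₁ x + c₂ * f₂ x = 0) →
        c₁ = 0 ∧ c₂ = 0) := by
  set P : ℂ → ℂ := fun x ↦ Q x - E * (x - a) ^ 2 with hP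
  have hP_diff : DifferentiableOn ℂ P (ball a R) := hQ.differentiableOn.sub (by fun_prop)
  have hqP (x : ℂ) (hx : x ∈ ball a R) (hxa : x ≠ a) : q x - E = P x / (x - a) ^ 2 := by
    rw [hq x hx hxa, hP, sub_div, mul_div_cancel_right₀ _ (pow_ne_zero 2 (sub_ne_zero.2 hxa))]
  have hP_even (x : ℂ) (hx : x ∈ ball a R) : P (2 * a - x) = P x :=
    even_about_of_even_about_div_sq hqP (fun z hz hz0 ↦ by rw [heven z hz hz0]) hx
  have hPa : P a = l * (l + 1) := by simp [hP, hQa]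
  obtain ⟨f₁, hf₁, hode₁, hmero₁, horder₁⟩ := exists_frobenius_solution (ρ := -l) hR hP_diff
    hP_even (by rw [hPa]; push_cast; ring)
  obtain ⟨f₂, hf₂, hode₂, hmero₂, horder₂⟩ := exists_frobenius_solution (ρ := l + 1) hR hP_diff
    hP_even (by rw [hPa]; push_cast; ring)
  have horder_ne : meromorphicOrderAt f₁ a ≠ meromorphicOrderAt f₂ a := by
    rw [horder₁, horder₂, Ne, WithTop.coe_inj]
    lia
  refine ⟨f₁, f₂, hf₁, hf₂, fun x hx ↦ hqP x hx.1 hx.2 ▸ hode₁ x hx,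
    fun x hx ↦ hqP x hx.1 hx.2 ▸ hode₂ x hx, fun c₁ c₂ h ↦ ?_⟩
  exact eq_zero_of_meromorphicOrderAt_ne hmero₁ hmero₂ (by simp [horder₁]) (by simp [horder₂])
    horder_ne (eventually_of_mem (sdiff_mem_nhdsWithin_compl (ball_mem_nhds a hR) {a}) h)
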